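/- Let b be a connected, canonically compactifiable graph over a finite discrete measure space (X,m), let c > 0, and let h ∈ ℓ²(X,m) with h not identically zero. Then there exists u ∈ D(L) with Lu = h e^u − c (i.e. Lu(x) = h(x)e^{u(x)} − c for all x ∈ X) if and only if h is positive somewhere, i.e. h(x₀) > 0 for some x₀ ∈ X. -/

import Mathlib

open scoped BigOperators

/-- `u` is square-summable with respect to the measure `m`, i.e. `u ∈ ℓ²(X,m)`. -/
def MemL2 {X : Type*} (m : X → ℝ) (u : X → ℝ) : Prop :=
  Summable (fun x => u x ^ 2 * m x)

/-- `u` has finite energy: the sum defining `Q̃(u)` converges. -/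
def FinEnergy {X : Type*} (b : X → X → ℝ) (u : X → ℝ) : Prop :=
  Summable (fun p : X × X => b p.1 p.2 * (u p.1 - u p.2) ^ 2)

/-- The energy `Q(u) = (1/2) Σ_{x,y} b(x,y) (u(x) - u(y))²`. -/
noncomputable def energy {X : Type*} (b : X → X → ℝ) (u : X → ℝ) : ℝ :=
  (1 / 2) * ∑' p : X × X, b p.1 p.2 * (u p.1 - u p.2) ^ 2

/-- The bilinear energy form `Q(u,v) = (1/2) Σ_{x,y} b(x,y)(u(x)-u(y))(v(x)-v(y))`. -/
noncomputable def energyBil {X : Type*} (b : X → X → ℝ) (u v : X → ℝ) : ℝ :=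
  (1 / 2) * ∑' p : X × X, b p.1 p.2 * (u p.1 - u p.2) * (v p.1 - v p.2)

/-- The form domain `D(Q) = ℓ²(X,m) ∩ D̃`. -/
def MemDQ {X : Type*} (b : X → X → ℝ) (m : X → ℝ) (u : X → ℝ) : Prop :=
  MemL2 m u ∧ FinEnergy b u

/-- The form norm `‖u‖_Q = (Q(u) + ‖u‖₂²)^{1/2}`. -/
noncomputable def formNorm {X : Type*} (b : X → X → ℝ) (m : X → ℝ) (u : X → ℝ) : ℝ :=
  Real.sqrt (energy b u + ∑' x, u x ^ 2 * m x)

/-- `b` is a graph over `X`: symmetric, nonnegative, zero on the diagonal,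
with summable rows. -/
structure IsGraph {X : Type*} (b : X → X → ℝ) : Prop where
  symm : ∀ x y, b x y = b y x
  nonneg : ∀ x y, 0 ≤ b x y
  diag : ∀ x, b x x = 0
  row_summable : ∀ x, Summable (fun y => b x y)

/-- The graph `b` is connected: any two points are joined by a path of edges of
positive weight. -/
def GraphConnected {X : Type*} (b : X → X → ℝ) : Prop :=
  ∀ x y : X, Relation.ReflTransGen (fun a c => 0 < b a c) x y

/-- `(X,m)` is a finite discrete measure space: `m > 0` everywhere and `m(X) < ∞`. -/
structure FinMeasure {X : Type*} (m : X → ℝ) : Prop where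
  pos : ∀ x, 0 < m x
  summable : Summable m

/-- The graph `b` over `(X,m)` is canonically compactifiable: every function in
`D(Q)` is bounded. -/
def CanCompact {X : Type*} (b : X → X → ℝ) (m : X → ℝ) : Prop :=
  ∀ u : X → ℝ, MemDQ b m u → ∃ M : ℝ, ∀ x, |u x| ≤ M

/-- `u ∈ D(L)` with `L u = f` for the Neumann Laplacian `L`:
`u ∈ D(Q)`, `f ∈ ℓ²(X,m)` and `Q(u,v) = ⟨f,v⟩` for all `v ∈ D(Q)`. -/
def IsLap {X : Type*} (b : X → X → ℝ) (m : X → ℝ) (u f : X → ℝ) : Prop :=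
  MemDQ b m u ∧ MemL2 m f ∧
    ∀ v : X → ℝ, MemDQ b m v → energyBil b u v = ∑' x, f x * v x * m x

/-- The mean `ū = ⟨u,1⟩ / m(X)`. -/
noncomputable def mean {X : Type*} (m : X → ℝ) (u : X → ℝ) : ℝ :=
  (∑' x, u x * m x) / (∑' x, m x)

namespace KW

variable {X : Type*} {b : X → X → ℝ} {m : X → ℝ}

lemma bdd_summable (hm : FinMeasure m) {h : X → ℝ} (hh : Summable (fun x => |h x| * m x))
    {g : X → ℝ} {R : ℝ} (hg : ∀ x, |g x| ≤ R) : Summable (fun x => h x * g x * m x) := by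
  refine Summable.of_norm_bounded (hh.mul_left R) (fun x => ?_)
  rw [Real.norm_eq_abs, abs_mul, abs_mul, abs_of_pos (hm.pos x)]
  have h1 := hg x
  have h2 := mul_nonneg (abs_nonneg (h x)) (hm.pos x).le
  nlinarith [mul_le_mul_of_nonneg_right h1 h2]

lemma l2_l1 (hm : FinMeasure m) {h : X → ℝ} (hh : MemL2 m h) :
    Summable (fun x => |h x| * m x) := by
  refine Summable.of_nonneg_of_le (fun x => mul_nonneg (abs_nonneg _) (hm.pos x).le) (fun x => ?_)
    (hh.add hm.summable)
  have : |h x| ≤ h x ^ 2 + 1 := by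
    rw [← sq_abs (h x)]; nlinarith [sq_nonneg (|h x| - 1)]
  nlinarith [hm.pos x]

lemma bdd_l2 (hm : FinMeasure m) {g : X → ℝ} {R : ℝ} (hg : ∀ x, |g x| ≤ R) : MemL2 m g := by
  refine Summable.of_nonneg_of_le (fun x => mul_nonneg (sq_nonneg _) (hm.pos x).le) (fun x => ?_)
    (hm.summable.mul_left (R ^ 2))
  have : g x ^ 2 ≤ R ^ 2 := by
    rw [← sq_abs (g x)]; exact pow_le_pow_left₀ (abs_nonneg _) (hg x) 2
  exact mul_le_mul_of_nonneg_right this (hm.pos x).le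

lemma l2_add (hm : FinMeasure m) {u v : X → ℝ} (hu : MemL2 m u) (hv : MemL2 m v) :
    MemL2 m (fun x => u x + v x) := by
  refine Summable.of_nonneg_of_le (fun x => mul_nonneg (sq_nonneg _) (hm.pos x).le) (fun x => ?_)
    ((hu.add hv).mul_left 2)
  nlinarith [mul_nonneg (sq_nonneg (u x - v x)) (hm.pos x).le]

lemma l2_smul {u : X → ℝ} (hu : MemL2 m u) (t : ℝ) : MemL2 m (fun x => t * u x) := by
  refine (hu.mul_left (t ^ 2)).congr (fun x => ?_)
  ring

lemma fe_cross (hb : IsGraph b) {u v : X → ℝ} (hu : FinEnergy b u) (hv : FinEnergy b v) :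
    Summable (fun p : X × X => b p.1 p.2 * (u p.1 - u p.2) * (v p.1 - v p.2)) := by
  refine Summable.of_norm_bounded (hu.add hv) (fun p => ?_)
  have hb0 := hb.nonneg p.1 p.2
  rw [Real.norm_eq_abs, abs_le]
  constructor
  · nlinarith [mul_nonneg hb0 (sq_nonneg ((u p.1 - u p.2) + (v p.1 - v p.2))),
      mul_nonneg hb0 (sq_nonneg (u p.1 - u p.2)), mul_nonneg hb0 (sq_nonneg (v p.1 - v p.2))]
  · nlinarith [mul_nonneg hb0 (sq_nonneg ((u p.1 - u p.2) - (v p.1 - v p.2))),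
      mul_nonneg hb0 (sq_nonneg (u p.1 - u p.2)), mul_nonneg hb0 (sq_nonneg (v p.1 - v p.2))]

lemma expand (hb : IsGraph b) {u v : X → ℝ} (hu : FinEnergy b u) (hv : FinEnergy b v) (t : ℝ) :
    FinEnergy b (fun x => u x + t * v x) ∧
    energy b (fun x => u x + t * v x) = energy b u + 2 * t * energyBil b u v + t ^ 2 * energy b v := by
  have hs := (hu.hasSum.add ((fe_cross hb hu hv).hasSum.mul_left (2 * t))).add
    (hv.hasSum.mul_left (t ^ 2))
  have heq : (fun p : X × X => b p.1 p.2 * ((u p.1 + t * v p.1) - (u p.2 + t * v p.2)) ^ 2) =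
      fun p : X × X => b p.1 p.2 * (u p.1 - u p.2) ^ 2 +
        2 * t * (b p.1 p.2 * (u p.1 - u p.2) * (v p.1 - v p.2)) +
        t ^ 2 * (b p.1 p.2 * (v p.1 - v p.2) ^ 2) := by
    funext p; ring
  have hs' := hs
  rw [← heq] at hs'
  refine ⟨hs'.summable, ?_⟩
  unfold energy energyBil
  rw [hs'.tsum_eq]
  ring

lemma energy_nonneg (hb : IsGraph b) (u : X → ℝ) : 0 ≤ energy b u := by
  unfold energy
  have : 0 ≤ ∑' p : X × X, b p.1 p.2 * (u p.1 - u p.2) ^ 2 :=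
    tsum_nonneg (fun p => mul_nonneg (hb.nonneg _ _) (sq_nonneg _))
  linarith

lemma edge_le (hb : IsGraph b) {u : X → ℝ} (hu : FinEnergy b u) (x y : X) :
    b x y * (u x - u y) ^ 2 ≤ 2 * energy b u := by
  have := hu.le_tsum (x, y) (fun p _ => mul_nonneg (hb.nonneg _ _) (sq_nonneg _))
  unfold energy
  simp only at this
  linarith

lemma shift_fe {u : X → ℝ} (s : ℝ) :
    (FinEnergy b (fun x => u x + s) ↔ FinEnergy b u) ∧
    energy b (fun x => u x + s) = energy b u := by
  simp [FinEnergy, energy]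

lemma const_dq (hm : FinMeasure m) (s : ℝ) : MemDQ b m (fun _ => s) := by
  refine ⟨bdd_l2 hm (R := |s|) (fun _ => le_rfl), ?_⟩
  simp [FinEnergy, summable_zero]

lemma shift_dq (hm : FinMeasure m) {u : X → ℝ} (hu : MemDQ b m u) (s : ℝ) :
    MemDQ b m (fun x => u x + s) :=
  ⟨l2_add hm hu.1 (const_dq (b := b) hm s).1, (shift_fe s).1.2 hu.2⟩

lemma add_dq (hb : IsGraph b) (hm : FinMeasure m) {u v : X → ℝ} (hu : MemDQ b m u)
    (hv : MemDQ b m v) (t : ℝ) : MemDQ b m (fun x => u x + t * v x) :=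
  ⟨l2_add hm hu.1 (l2_smul hv.1 t), (expand hb hu.2 hv.2 t).1⟩

lemma single_dq [DecidableEq X] (hb : IsGraph b) (hm : FinMeasure m) (o : X) :
    MemDQ b m (fun x => if x = o then 1 else 0) := by
  refine ⟨bdd_l2 hm (R := 1) (fun x => by split_ifs <;> simp), ?_⟩
  have h1 : Summable (fun p : X × X => if p.1 = o then b p.1 p.2 else 0) := by
    rw [summable_prod_of_nonneg (fun p => by
      dsimp only; split_ifs; exacts [hb.nonneg _ _, le_rfl])]
    constructor
    · intro x
      by_cases hx : x = o
      · simpa [hx] using hb.row_summable o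
      · simp [hx, summable_zero]
    · refine summable_of_ne_finset_zero (s := {o}) (fun x hx => ?_)
      have hx : x ≠ o := by simpa using hx
      simp [hx]
  have h2 : Summable (fun p : X × X => if p.2 = o then b p.2 p.1 else 0) :=
    (Equiv.prodComm X X).summable_iff.2 h1
  refine Summable.of_nonneg_of_le (fun p => mul_nonneg (hb.nonneg _ _) (sq_nonneg _)) (fun p => ?_)
    (h1.add h2)
  have := hb.symm p.1 p.2
  have h0 := hb.nonneg p.1 p.2
  have h0' := hb.nonneg p.2 p.1
  dsimp only
  split_ifs <;> simp <;> linarith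

/-- Closed-graph type estimate. -/
lemma sup_le_form (hb : IsGraph b) (hm : FinMeasure m) (hcc : CanCompact b m) :
    ∃ C : ℝ, 0 ≤ C ∧ ∀ u, MemDQ b m u → ∀ x,
      u x ^ 2 ≤ C * (energy b u + ∑' x, u x ^ 2 * m x) := by
  by_contra hcon
  push Not at hcon
  have hch : ∀ n : ℕ, ∃ u, MemDQ b m u ∧ (∀ x, 0 ≤ u x) ∧
      energy b u + ∑' x, u x ^ 2 * m x ≤ (1 / 2) ^ n ∧ ∃ x, (n : ℝ) ≤ u x := by
    intro n
    obtain ⟨u, hu, x, hx⟩ := hcon ((n + 1) ^ 2 * 2 ^ n) (by positivity)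
    have hux : 0 < |u x| := by
      rw [abs_pos]
      intro h0
      rw [h0] at hx
      have h1 := energy_nonneg hb u
      have h2 : 0 ≤ ∑' x, u x ^ 2 * m x :=
        tsum_nonneg (fun x => mul_nonneg (sq_nonneg _) (hm.pos x).le)
      have : 0 ≤ ((n:ℝ) + 1) ^ 2 * 2 ^ n * (energy b u + ∑' x, u x ^ 2 * m x) := by positivity
      simp at hx
      linarith
    set k : ℝ := (n + 1) / |u x| with hk
    have hkpos : 0 < k := by positivity
    have hpt : ∀ p : X × X, b p.1 p.2 * (k * |u p.1| - k * |u p.2|) ^ 2 ≤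
        k ^ 2 * (b p.1 p.2 * (u p.1 - u p.2) ^ 2) := by
      intro p
      have h1 : (|u p.1| - |u p.2|) ^ 2 ≤ (u p.1 - u p.2) ^ 2 :=
        sq_le_sq.2 (abs_abs_sub_abs_le _ _)
      have h2 := mul_le_mul_of_nonneg_left h1 (mul_nonneg (sq_nonneg k) (hb.nonneg p.1 p.2))
      nlinarith
    have hfe : FinEnergy b (fun y => k * |u y|) :=
      Summable.of_nonneg_of_le (fun p => mul_nonneg (hb.nonneg _ _) (sq_nonneg _)) hpt
        (hu.2.mul_left (k ^ 2))
    have hl : (fun y => (k * |u y|) ^ 2 * m y) = fun y => k ^ 2 * (u y ^ 2 * m y) := by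
      funext y; rw [mul_pow, sq_abs]; ring
    refine ⟨fun y => k * |u y|, ⟨?_, hfe⟩, fun y => by positivity, ?_, x, ?_⟩
    · unfold MemL2; rw [hl]; exact hu.1.mul_left _
    · simp only [hl]
      rw [tsum_mul_left]
      have he : energy b (fun y => k * |u y|) ≤ k ^ 2 * energy b u := by
        unfold energy
        have := hfe.tsum_le_tsum hpt (hu.2.mul_left (k ^ 2))
        rw [tsum_mul_left] at this
        linarith
      have h3 : k ^ 2 * (energy b u + ∑' x, u x ^ 2 * m x) ≤ (1 / 2) ^ n := by
        rw [hk, div_pow, sq_abs, div_mul_eq_mul_div, div_le_iff₀ (by rw [← sq_abs]; positivity)]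
        rw [one_div, inv_pow, ← div_eq_inv_mul, le_div_iff₀ (by positivity)]
        linarith
      linarith
    · simp only [hk]
      rw [div_mul_cancel₀ _ hux.ne']
      linarith
  choose w hw hw0 hwe y hy using hch
  have hgeo : Summable (fun n : ℕ => ((1:ℝ) / 2) ^ n) := summable_geometric_two
  have hl2nn : ∀ n, 0 ≤ ∑' x, w n x ^ 2 * m x := fun n =>
    tsum_nonneg (fun x => mul_nonneg (sq_nonneg _) (hm.pos x).le)
  have hwx : ∀ n x, w n x ^ 2 * m x ≤ (1 / 2) ^ n := by
    intro n x
    have h1 := (hw n).1.le_tsum x (fun x _ => mul_nonneg (sq_nonneg _) (hm.pos x).le)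
    have h2 := energy_nonneg hb (w n)
    have := hwe n
    linarith
  have hbd : ∀ x, BddAbove (Set.range (fun n => w n x)) := by
    intro x
    refine ⟨1 / m x + 1, ?_⟩
    rintro _ ⟨n, rfl⟩
    have h1 := hwx n x
    have h2 : ((1:ℝ) / 2) ^ n ≤ 1 := pow_le_one₀ (by norm_num) (by norm_num)
    have h3 : w n x ^ 2 ≤ 1 / m x := by
      rw [le_div_iff₀ (hm.pos x)]; linarith
    dsimp only
    nlinarith [sq_nonneg (w n x - 1)]
  set W : X → ℝ := fun x => ⨆ n, w n x with hW
  have hWle : ∀ n x, w n x ≤ W x := fun n x => le_ciSup (hbd x) n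
  have hW0 : ∀ x, 0 ≤ W x := fun x => (hw0 0 x).trans (hWle 0 x)
  -- l2
  have hs1 : ∀ x, Summable (fun n => w n x ^ 2) := by
    intro x
    refine Summable.of_nonneg_of_le (fun n => sq_nonneg _) (fun n => ?_) (hgeo.mul_right (1 / m x))
    have := hwx n x
    rw [mul_one_div, le_div_iff₀ (hm.pos x)]; exact this
  have hWsq : ∀ x, W x ^ 2 ≤ ∑' n, w n x ^ 2 := by
    intro x
    have : W x ≤ Real.sqrt (∑' n, w n x ^ 2) :=
      ciSup_le (fun n => Real.le_sqrt_of_sq_le ((hs1 x).le_tsum n (fun _ _ => sq_nonneg _)))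
    have hnn : 0 ≤ ∑' n, w n x ^ 2 := tsum_nonneg (fun _ => sq_nonneg _)
    calc W x ^ 2 ≤ (Real.sqrt (∑' n, w n x ^ 2)) ^ 2 := pow_le_pow_left₀ (hW0 x) this 2
      _ = _ := Real.sq_sqrt hnn
  have hWl2 : MemL2 m W := by
    have hprod : Summable (fun q : ℕ × X => w q.1 q.2 ^ 2 * m q.2) := by
      rw [summable_prod_of_nonneg (fun q => mul_nonneg (sq_nonneg _) (hm.pos _).le)]
      refine ⟨fun n => (hw n).1, ?_⟩
      refine Summable.of_nonneg_of_le hl2nn (fun n => ?_) hgeo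
      have h2 := energy_nonneg hb (w n)
      have := hwe n
      dsimp only
      linarith
    have hsw := ((Equiv.prodComm X ℕ).summable_iff.2 hprod).prod
    refine Summable.of_nonneg_of_le (fun x => mul_nonneg (sq_nonneg _) (hm.pos x).le) (fun x => ?_) hsw
    simp only [Function.comp, Equiv.prodComm_apply, Prod.swap]
    rw [tsum_mul_right]
    exact mul_le_mul_of_nonneg_right (hWsq x) (hm.pos x).le
  have hdiff : ∀ x z, Summable (fun n => (w n x - w n z) ^ 2) := by
    intro x z
    refine Summable.of_nonneg_of_le (fun n => sq_nonneg _) (fun n => ?_) ((hs1 x).add (hs1 z))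
    nlinarith [mul_nonneg (hw0 n x) (hw0 n z)]
  have hWd1 : ∀ x z, W x - W z ≤ Real.sqrt (∑' n, (w n x - w n z) ^ 2) := by
    intro x z
    rw [sub_le_iff_le_add]
    refine ciSup_le (fun n => ?_)
    have h1 := Real.le_sqrt_of_sq_le ((hdiff x z).le_tsum n (fun _ _ => sq_nonneg _))
    have h2 := hWle n z
    linarith
  have hWd : ∀ x z, (W x - W z) ^ 2 ≤ ∑' n, (w n x - w n z) ^ 2 := by
    intro x z
    have hnn : 0 ≤ ∑' n, (w n x - w n z) ^ 2 := tsum_nonneg (fun _ => sq_nonneg _)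
    have h1 := hWd1 x z
    have h2 := hWd1 z x
    have h3 : (fun n => (w n z - w n x) ^ 2) = fun n => (w n x - w n z) ^ 2 := by funext n; ring
    rw [h3] at h2
    rw [← Real.sq_sqrt hnn]
    exact sq_le_sq' (by linarith) h1
  have hWfe : FinEnergy b W := by
    have hprod : Summable (fun q : ℕ × (X × X) => b q.2.1 q.2.2 * (w q.1 q.2.1 - w q.1 q.2.2) ^ 2) := by
      rw [summable_prod_of_nonneg (fun q => mul_nonneg (hb.nonneg _ _) (sq_nonneg _))]
      refine ⟨fun n => (hw n).2, ?_⟩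
      refine Summable.of_nonneg_of_le (fun n => tsum_nonneg
        (fun q => mul_nonneg (hb.nonneg _ _) (sq_nonneg _))) (fun n => ?_) (hgeo.mul_left 2)
      have h2 := hl2nn n
      have := hwe n
      unfold energy at this
      dsimp only
      linarith
    have hsw := ((Equiv.prodComm (X × X) ℕ).summable_iff.2 hprod).prod
    refine Summable.of_nonneg_of_le (fun q => mul_nonneg (hb.nonneg _ _) (sq_nonneg _)) (fun q => ?_) hsw
    simp only [Function.comp, Equiv.prodComm_apply, Prod.swap]
    rw [tsum_mul_left]
    exact mul_le_mul_of_nonneg_left (hWd _ _) (hb.nonneg _ _)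
  obtain ⟨M, hM⟩ := hcc W ⟨hWl2, hWfe⟩
  obtain ⟨n, hn⟩ := exists_nat_gt M
  have h1 := hM (y n)
  have h2 := hWle n (y n)
  have h3 := hy n
  have h4 := le_abs_self (W (y n))
  linarith

lemma path_bound (hb : IsGraph b) (hconn : GraphConnected b) (o x : X) :
    ∃ C : ℝ, 0 ≤ C ∧ ∀ u, FinEnergy b u → (u x - u o) ^ 2 ≤ C * energy b u := by
  induction hconn o x with
  | refl => exact ⟨0, le_rfl, fun u _ => by simp⟩
  | @tail y z _ hyz ih =>
    obtain ⟨C, hC, h⟩ := ih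
    refine ⟨2 * C + 4 / b y z, by positivity, fun u hu => ?_⟩
    have h1 := h u hu
    have h2 := edge_le hb hu y z
    have h3 : (u y - u z) ^ 2 ≤ 2 / b y z * energy b u := by
      rw [div_mul_eq_mul_div, le_div_iff₀ hyz]; linarith
    have h4 : (2 * C + 4 / b y z) * energy b u = 2 * (C * energy b u) + 2 * (2 / b y z * energy b u) := by
      ring
    rw [h4]
    nlinarith [sq_nonneg ((u z - u y) - (u y - u o))]

lemma sup_bound (hb : IsGraph b) (hconn : GraphConnected b) (hm : FinMeasure m)
    (hcc : CanCompact b m) (o : X) :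
    ∃ K : ℝ, 0 ≤ K ∧ ∀ u, MemDQ b m u → u o = 0 → ∀ x, |u x| ≤ K * Real.sqrt (energy b u) := by
  obtain ⟨C, hC, hCb⟩ := sup_le_form hb hm hcc
  choose P hP hPb using path_bound hb hconn o
  obtain ⟨F, hF⟩ : ∃ F : Finset X, C * (∑' x, m x - ∑ x ∈ F, m x) ≤ 1 / 2 := by
    have h1 : Filter.Tendsto (fun F : Finset X => C * (∑' x, m x - ∑ x ∈ F, m x)) Filter.atTop
        (nhds (C * (∑' x, m x - ∑' x, m x))) :=
      (tendsto_const_nhds.sub hm.summable.hasSum).const_mul C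
    rw [sub_self, mul_zero] at h1
    exact (h1.eventually_le_const (by norm_num)).exists
  set D := ∑ x ∈ F, P x * m x with hD
  have hD0 : 0 ≤ D := Finset.sum_nonneg (fun x _ => mul_nonneg (hP x) (hm.pos x).le)
  refine ⟨Real.sqrt (C * (1 + (2 * D + 1))), Real.sqrt_nonneg _, fun u hu huo x => ?_⟩
  set E := energy b u with hE
  have hE0 : 0 ≤ E := energy_nonneg hb u
  set N := ∑' x, u x ^ 2 * m x with hN
  have hN0 : 0 ≤ N := tsum_nonneg (fun x => mul_nonneg (sq_nonneg _) (hm.pos x).le)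
  have hsplit : N ≤ D * E + C * (E + N) * (∑' x, m x - ∑ x ∈ F, m x) := by
    have h1 : ∑ x ∈ F, u x ^ 2 * m x ≤ D * E := by
      rw [hD, Finset.sum_mul]
      refine Finset.sum_le_sum (fun x _ => ?_)
      have := hPb x u hu.2
      rw [huo, sub_zero] at this
      nlinarith [hm.pos x, mul_le_mul_of_nonneg_right this (hm.pos x).le]
    have h2 := hu.1.sum_add_tsum_subtype_compl F
    have h3 := hm.summable.sum_add_tsum_subtype_compl F
    have h4 : ∑' x : {x // x ∉ F}, u x ^ 2 * m x ≤ ∑' x : {x // x ∉ F}, C * (E + N) * m x :=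
      Summable.tsum_le_tsum (fun x => mul_le_mul_of_nonneg_right (hCb u hu x) (hm.pos _).le)
        (hu.1.subtype _) ((hm.summable.subtype _).mul_left _)
    rw [tsum_mul_left] at h4
    have h5 : ∑' x : {x // x ∉ F}, m x = ∑' x, m x - ∑ x ∈ F, m x := by linarith
    rw [h5] at h4
    linarith
  have hN2 : N ≤ (2 * D + 1) * E := by
    have := mul_le_mul_of_nonneg_right hF (add_nonneg hE0 hN0)
    nlinarith
  rw [← Real.sqrt_mul (by positivity)]
  refine Real.abs_le_sqrt ?_
  refine (hCb u hu x).trans ?_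
  rw [mul_assoc]
  refine mul_le_mul_of_nonneg_left ?_ hC
  linarith

/-- `∑ h e^u m`. -/
noncomputable def expInt (m h u : X → ℝ) : ℝ := ∑' x, h x * Real.exp (u x) * m x

/-- The functional to be minimised. -/
noncomputable def Fun (b : X → X → ℝ) (m h : X → ℝ) (c : ℝ) (u : X → ℝ) : ℝ :=
  energy b u / 2 + c * (∑' x, u x * m x) - c * (∑' x, m x) * Real.log (expInt m h u)

lemma exp_bdd {u : X → ℝ} {R : ℝ} (hu : ∀ x, |u x| ≤ R) (x : X) :
    |Real.exp (u x)| ≤ Real.exp R := by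
  rw [abs_of_pos (Real.exp_pos _)]
  exact Real.exp_le_exp.2 ((le_abs_self _).trans (hu x))

lemma sum_bdd (hm : FinMeasure m) {u : X → ℝ} {R : ℝ} (hu : ∀ x, |u x| ≤ R) :
    Summable (fun x => u x * m x) ∧ |∑' x, u x * m x| ≤ R * ∑' x, m x := by
  have hle : ∀ x, ‖u x * m x‖ ≤ R * m x := fun x => by
    rw [Real.norm_eq_abs, abs_mul, abs_of_pos (hm.pos x)]
    exact mul_le_mul_of_nonneg_right (hu x) (hm.pos x).le
  refine ⟨Summable.of_norm_bounded (hm.summable.mul_left R) hle, ?_⟩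
  exact tsum_of_norm_bounded (hm.summable.hasSum.mul_left R) hle

lemma expInt_le (hm : FinMeasure m) {h : X → ℝ} (hh : Summable (fun x => |h x| * m x))
    {u : X → ℝ} {R : ℝ} (hu : ∀ x, |u x| ≤ R) :
    expInt m h u ≤ Real.exp R * ∑' x, |h x| * m x := by
  refine (le_abs_self _).trans (tsum_of_norm_bounded (f := fun x => h x * Real.exp (u x) * m x)
    (hh.hasSum.mul_left (Real.exp R)) (fun x => ?_))
  rw [Real.norm_eq_abs, abs_mul, abs_mul, abs_of_pos (hm.pos x)]
  have h1 := exp_bdd hu x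
  have h2 := mul_nonneg (abs_nonneg (h x)) (hm.pos x).le
  nlinarith [mul_le_mul_of_nonneg_right h1 h2]

lemma expInt_shift {h u : X → ℝ} (s : ℝ) :
    expInt m h (fun x => u x + s) = Real.exp s * expInt m h u := by
  unfold expInt
  rw [← tsum_mul_left]
  refine tsum_congr (fun x => ?_)
  rw [Real.exp_add]; ring

lemma Fun_shift (hm : FinMeasure m) {h u : X → ℝ} {c : ℝ} {R : ℝ} (hu : ∀ x, |u x| ≤ R)
    (hA : 0 < expInt m h u) (s : ℝ) :
    Fun b m h c (fun x => u x + s) = Fun b m h c u := by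
  unfold Fun
  rw [expInt_shift, (shift_fe s).2, Real.log_mul (Real.exp_pos _).ne' hA.ne', Real.log_exp]
  have : ∑' x, (u x + s) * m x = ∑' x, u x * m x + s * ∑' x, m x := by
    rw [← tsum_mul_left, ← (sum_bdd hm hu).1.tsum_add (hm.summable.mul_left s)]
    refine tsum_congr (fun x => ?_)
    ring
  rw [this]; ring

lemma coercive (hb : IsGraph b) (hconn : GraphConnected b) (hm : FinMeasure m)
    (hcc : CanCompact b m) (o : X) {c : ℝ} (hc : 0 < c) {h : X → ℝ}
    (hh : Summable (fun x => |h x| * m x)) :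
    ∃ B : ℝ, ∀ u, MemDQ b m u → u o = 0 → 0 < expInt m h u →
      energy b u ≤ 4 * (Fun b m h c u + B) := by
  obtain ⟨K, hK, hKb⟩ := sup_bound hb hconn hm hcc o
  set M := ∑' x, m x with hM
  have hM0 : 0 ≤ M := tsum_nonneg (fun x => (hm.pos x).le)
  set H := ∑' x, |h x| * m x with hH
  refine ⟨(2 * (c * M * K)) ^ 2 + c * M * Real.log H, fun u hu huo hA => ?_⟩
  have hbd := hKb u hu huo
  set s := Real.sqrt (energy b u) with hs
  have hs2 : s ^ 2 = energy b u := Real.sq_sqrt (energy_nonneg hb u)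
  have h1 := expInt_le hm hh hbd
  have hHpos : 0 < H := by
    by_contra hneg
    have := mul_nonpos_of_nonneg_of_nonpos (Real.exp_pos (K * s)).le (not_lt.1 hneg)
    linarith
  have h2 : Real.log (expInt m h u) ≤ K * s + Real.log H := by
    have := Real.log_le_log hA h1
    rwa [Real.log_mul (Real.exp_pos _).ne' hHpos.ne', Real.log_exp] at this
  have h3 := neg_le_of_abs_le (sum_bdd hm hbd).2
  have hcM : 0 ≤ c * M := by positivity
  have h4 := mul_le_mul_of_nonneg_left h2 hcM
  have h5 := mul_le_mul_of_nonneg_left h3 hc.le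
  unfold Fun
  rw [← hM, ← hs2]
  nlinarith [sq_nonneg (s / 2 - 2 * (c * M * K))]

lemma exists_min [Countable X] (hb : IsGraph b) (hconn : GraphConnected b) (hm : FinMeasure m)
    (hcc : CanCompact b m) (o : X) {c : ℝ} (hc : 0 < c) {h : X → ℝ}
    (hh : Summable (fun x => |h x| * m x)) (hpos : ∃ u, MemDQ b m u ∧ 0 < expInt m h u) :
    ∃ u, MemDQ b m u ∧ 0 < expInt m h u ∧
      ∀ v, MemDQ b m v → 0 < expInt m h v → Fun b m h c u ≤ Fun b m h c v := by
  obtain ⟨B, hB⟩ := coercive hb hconn hm hcc o hc hh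
  obtain ⟨K, hK, hKb⟩ := sup_bound hb hconn hm hcc o
  set M := ∑' x, m x with hM
  have hMpos : 0 < M := hm.summable.tsum_pos (fun x => (hm.pos x).le) o (hm.pos o)
  have hnorm : ∀ v, MemDQ b m v → 0 < expInt m h v → ∃ w, MemDQ b m w ∧ w o = 0 ∧
      0 < expInt m h w ∧ Fun b m h c w = Fun b m h c v := by
    intro v hv hA
    obtain ⟨R, hR⟩ := hcc v hv
    refine ⟨fun x => v x + -v o, shift_dq hm hv _, by simp, ?_, Fun_shift hm hR hA _⟩
    rw [expInt_shift]
    exact mul_pos (Real.exp_pos _) hA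
  set S : Set ℝ := {r | ∃ w, MemDQ b m w ∧ w o = 0 ∧ 0 < expInt m h w ∧ Fun b m h c w = r} with hS
  have hSne : S.Nonempty := by
    obtain ⟨v, hv, hA⟩ := hpos
    obtain ⟨w, h1, h2, h3, _⟩ := hnorm v hv hA
    exact ⟨_, w, h1, h2, h3, rfl⟩
  have hSbd : BddBelow S := by
    refine ⟨-B, ?_⟩
    rintro r ⟨w, h1, h2, h3, rfl⟩
    have := hB w h1 h2 h3
    have := energy_nonneg hb w
    linarith
  obtain ⟨r, hranti, hrlim, hrS⟩ := exists_seq_tendsto_sInf hSne hSbd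
  set I := sInf S with hI
  choose w hw hwo hwA hwF using hrS
  set R := K * Real.sqrt (4 * (r 0 + B)) with hR
  have hbd : ∀ n x, |w n x| ≤ R := by
    intro n x
    refine (hKb (w n) (hw n) (hwo n) x).trans (mul_le_mul_of_nonneg_left (Real.sqrt_le_sqrt ?_) hK)
    have h1 := hB (w n) (hw n) (hwo n) (hwA n)
    have h2 := hranti (Nat.zero_le n)
    rw [hwF] at h1
    linarith
  have hcomp : IsCompact (Set.pi Set.univ (fun _ : X => Set.Icc (-R) R)) :=
    isCompact_univ_pi (fun _ => isCompact_Icc)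
  obtain ⟨u, hu, φ, hφ, hlim⟩ := hcomp.tendsto_subseq (x := w)
    (fun n x _ => abs_le.1 (hbd n x))
  have hubd : ∀ x, |u x| ≤ R := fun x => abs_le.2 (hu x (Set.mem_univ x))
  have hpt : ∀ x, Filter.Tendsto (fun n => w (φ n) x) Filter.atTop (nhds (u x)) := by
    intro x
    exact (tendsto_pi_nhds.1 hlim) x
  have hrφ : Filter.Tendsto (fun n => r (φ n)) Filter.atTop (nhds I) := hrlim.comp hφ.tendsto_atTop
  have hA : Filter.Tendsto (fun n => expInt m h (w (φ n))) Filter.atTop (nhds (expInt m h u)) := by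
    refine tendsto_tsum_of_dominated_convergence (bound := fun x => Real.exp R * (|h x| * m x))
      (hh.mul_left _) (fun x => ?_) (Filter.Eventually.of_forall (fun n x => ?_))
    · exact (((Real.continuous_exp.tendsto _).comp (hpt x)).const_mul (h x)).mul_const (m x)
    · rw [Real.norm_eq_abs, abs_mul, abs_mul, abs_of_pos (hm.pos x)]
      have h1 := exp_bdd (hbd (φ n)) x
      have h2 := mul_nonneg (abs_nonneg (h x)) (hm.pos x).le
      nlinarith [mul_le_mul_of_nonneg_right h1 h2]
  have hL : Filter.Tendsto (fun n => ∑' x, w (φ n) x * m x) Filter.atTop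
      (nhds (∑' x, u x * m x)) := by
    refine tendsto_tsum_of_dominated_convergence (bound := fun x => R * m x)
      (hm.summable.mul_left _) (fun x => (hpt x).mul_const (m x))
      (Filter.Eventually.of_forall (fun n x => ?_))
    rw [Real.norm_eq_abs, abs_mul, abs_of_pos (hm.pos x)]
    exact mul_le_mul_of_nonneg_right (hbd _ x) (hm.pos x).le
  have hcM : 0 < c * M := mul_pos hc hMpos
  have hEn : ∀ n, energy b (w n) / 2 =
      r n - c * (∑' x, w n x * m x) + c * M * Real.log (expInt m h (w n)) := by
    intro n
    rw [← hwF n]; unfold Fun; ring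
  have hlow : ∀ n, Real.exp ((-(c * (R * M)) - r 0) / (c * M)) ≤ expInt m h (w n) := by
    intro n
    rw [← Real.le_log_iff_exp_le (hwA n), div_le_iff₀ hcM]
    have h1 := energy_nonneg hb (w n)
    have h2 := hEn n
    have h3 := mul_le_mul_of_nonneg_left (neg_le_of_abs_le (sum_bdd hm (hbd n)).2) hc.le
    have h4 := hranti (Nat.zero_le n)
    rw [← hM] at h3
    linarith
  have hApos : 0 < expInt m h u :=
    (Real.exp_pos _).trans_le (ge_of_tendsto' hA (fun n => hlow (φ n)))
  set E := I - c * (∑' x, u x * m x) + c * M * Real.log (expInt m h u) with hE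
  have hElim : Filter.Tendsto (fun n => energy b (w (φ n)) / 2) Filter.atTop (nhds E) := by
    simp only [hEn]
    exact (hrφ.sub (hL.const_mul c)).add ((hA.log hApos.ne').const_mul (c * M))
  have hfin : ∀ T : Finset (X × X), ∑ p ∈ T, b p.1 p.2 * (u p.1 - u p.2) ^ 2 ≤ 4 * E := by
    intro T
    refine le_of_tendsto_of_tendsto' (f := fun n => ∑ p ∈ T, b p.1 p.2 * (w (φ n) p.1 - w (φ n) p.2) ^ 2)
      (tendsto_finsetSum _ (fun p _ => (((hpt p.1).sub (hpt p.2)).pow 2).const_mul _))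
      (hElim.const_mul 4) (fun n => ?_)
    have := (hw (φ n)).2.sum_le_tsum T (fun p _ => mul_nonneg (hb.nonneg _ _) (sq_nonneg _))
    unfold energy
    linarith
  have hfe : FinEnergy b u :=
    summable_of_sum_le (fun p => mul_nonneg (hb.nonneg _ _) (sq_nonneg _)) hfin
  have hEu : energy b u / 2 ≤ E := by
    have := hfe.tsum_le_of_sum_le hfin
    unfold energy
    linarith
  have hFu : Fun b m h c u ≤ I := by
    unfold Fun
    rw [← hM]
    linarith
  refine ⟨u, ⟨bdd_l2 hm hubd, hfe⟩, hApos, fun v hv hvA => hFu.trans ?_⟩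
  obtain ⟨w', h1, h2, h3, h4⟩ := hnorm v hv hvA
  exact csInf_le hSbd ⟨w', h1, h2, h3, h4⟩

lemma expInt_deriv (hm : FinMeasure m) {h : X → ℝ} (hh : Summable (fun x => |h x| * m x))
    {u v : X → ℝ} {R S : ℝ} (hu : ∀ x, |u x| ≤ R) (hv : ∀ x, |v x| ≤ S) :
    HasDerivAt (fun t => expInt m h (fun x => u x + t * v x))
      (∑' x, h x * Real.exp (u x) * v x * m x) 0 := by
  have key := hasDerivAt_tsum_of_isPreconnected (t := Metric.ball (0:ℝ) 1) (y₀ := 0) (y := 0)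
    (g := fun x t => h x * Real.exp (u x + t * v x) * m x)
    (g' := fun x t => h x * (Real.exp (u x + t * v x) * v x) * m x)
    (u := fun x => Real.exp (R + S) * S * (|h x| * m x))
    (hh.mul_left _) Metric.isOpen_ball (convex_ball _ _).isPreconnected ?_ ?_ (by simp)
    ?_ (by simp)
  · have he : (∑' x, h x * Real.exp (u x) * v x * m x) =
        ∑' x, h x * (Real.exp (u x + 0 * v x) * v x) * m x := by
      refine tsum_congr (fun x => ?_)
      rw [zero_mul, add_zero]; ring
    rw [he]
    exact key
  · intro x t _
    have h1 : HasDerivAt (fun t : ℝ => u x + t * v x) (v x) t := by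
      simpa using ((hasDerivAt_id t).mul_const (v x)).const_add (u x)
    exact (h1.exp.const_mul (h x)).mul_const (m x)
  · intro x t ht
    have ht : |t| < 1 := by simpa using ht
    rw [Real.norm_eq_abs, abs_mul, abs_mul, abs_mul, abs_of_pos (hm.pos x)]
    have hS : 0 ≤ S := (abs_nonneg _).trans (hv x)
    have h0 : |u x + t * v x| ≤ R + S := by
      refine (abs_add_le _ _).trans (add_le_add (hu x) ?_)
      rw [abs_mul]
      nlinarith [hv x, abs_nonneg t, abs_nonneg (v x)]
    have h1 : |Real.exp (u x + t * v x)| ≤ Real.exp (R + S) := by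
      rw [abs_of_pos (Real.exp_pos _)]
      exact Real.exp_le_exp.2 ((le_abs_self _).trans h0)
    have h2 := mul_le_mul h1 (hv x) (abs_nonneg _) (Real.exp_pos _).le
    have h3 := mul_nonneg (abs_nonneg (h x)) (hm.pos x).le
    nlinarith [mul_le_mul_of_nonneg_right h2 h3]
  · simp only [zero_mul, add_zero]
    exact bdd_summable hm hh (exp_bdd hu)

lemma euler (hb : IsGraph b) (hm : FinMeasure m) (hcc : CanCompact b m) {c : ℝ} {h : X → ℝ}
    (hh : Summable (fun x => |h x| * m x)) {u : X → ℝ} (hu : MemDQ b m u)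
    (hA : 0 < expInt m h u)
    (hmin : ∀ v, MemDQ b m v → 0 < expInt m h v → Fun b m h c u ≤ Fun b m h c v)
    {v : X → ℝ} (hv : MemDQ b m v) :
    energyBil b u v + c * (∑' x, v x * m x) -
      c * (∑' x, m x) * ((∑' x, h x * Real.exp (u x) * v x * m x) / expInt m h u) = 0 := by
  obtain ⟨R, hR⟩ := hcc u hu
  obtain ⟨S, hS⟩ := hcc v hv
  have hd := expInt_deriv hm hh hR hS
  have h0 : expInt m h (fun x => u x + 0 * v x) = expInt m h u := by simp
  set A1 := ∑' x, h x * Real.exp (u x) * v x * m x with hA1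
  set M := ∑' x, m x with hM
  have hlog : HasDerivAt (fun t => Real.log (expInt m h (fun x => u x + t * v x)))
      (A1 / expInt m h u) 0 := by
    have := hd.log (by rw [h0]; exact hA.ne')
    rwa [h0] at this
  have hlin : ∀ t : ℝ, ∑' x, (u x + t * v x) * m x = ∑' x, u x * m x + t * ∑' x, v x * m x := by
    intro t
    rw [← tsum_mul_left, ← (sum_bdd hm hR).1.tsum_add ((sum_bdd hm hS).1.mul_left t)]
    refine tsum_congr (fun x => ?_)
    ring
  have hF : ∀ t : ℝ, Fun b m h c (fun x => u x + t * v x) =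
      (energy b u / 2 + c * ∑' x, u x * m x) + t * (energyBil b u v + c * ∑' x, v x * m x)
       + t ^ 2 * (energy b v / 2) - c * M * Real.log (expInt m h (fun x => u x + t * v x)) := by
    intro t
    unfold Fun
    rw [hlin, (expand hb hu.2 hv.2 t).2]
    ring
  have hFd : HasDerivAt (fun t : ℝ => Fun b m h c (fun x => u x + t * v x))
      (energyBil b u v + c * (∑' x, v x * m x) - c * M * (A1 / expInt m h u)) 0 := by
    simp only [hF]
    have h1 := ((((hasDerivAt_id (0:ℝ)).mul_const (energyBil b u v + c * ∑' x, v x * m x)).const_add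
      (energy b u / 2 + c * ∑' x, u x * m x)).add
      (((hasDerivAt_id (0:ℝ)).pow 2).mul_const (energy b v / 2))).sub (hlog.const_mul (c * M))
    have h2 : (energyBil b u v + c * (∑' x, v x * m x) - c * M * (A1 / expInt m h u)) =
      1 * (energyBil b u v + c * ∑' x, v x * m x) + (2:ℕ) * id (0:ℝ) ^ (2 - 1) * 1 * (energy b v / 2)
        - c * M * (A1 / expInt m h u) := by
      simp
    rw [h2]
    exact h1
  have hloc : IsLocalMin (fun t : ℝ => Fun b m h c (fun x => u x + t * v x)) 0 := by
    have hev := hd.continuousAt.eventually (lt_mem_nhds (a := 0) (by simpa using hA))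
    filter_upwards [hev] with t ht
    simp only [zero_mul, add_zero]
    exact hmin _ (add_dq hb hm hu hv t) ht
  exact hloc.hasDerivAt_eq_zero hFd

lemma exists_pos_expInt (hb : IsGraph b) (hm : FinMeasure m) {h : X → ℝ}
    (hh : Summable (fun x => |h x| * m x)) {o : X} (ho : 0 < h o) :
    ∃ u, MemDQ b m u ∧ 0 < expInt m h u := by
  classical
  set H := ∑' x, |h x| * m x with hH
  have hH0 : 0 ≤ H := tsum_nonneg (fun x => mul_nonneg (abs_nonneg _) (hm.pos x).le)
  have hom : 0 < h o * m o := mul_pos ho (hm.pos o)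
  set T := Real.log ((H + 1) / (h o * m o) + 1) with hT
  have hTe : Real.exp T = (H + 1) / (h o * m o) + 1 := Real.exp_log (by positivity)
  have hq := add_dq hb hm (const_dq (b := b) hm 0) (single_dq hb hm o) T
  refine ⟨_, hq, ?_⟩
  have heq : expInt m h (fun x => 0 + T * (if x = o then 1 else 0)) =
      ∑' x, (h x * m x + if x = o then (Real.exp T - 1) * (h o * m o) else 0) := by
    unfold expInt
    refine tsum_congr (fun x => ?_)
    split_ifs with hx
    · subst hx; simp; ring
    · simp [hx]
  have hs : Summable (fun x => h x * m x) := by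
    simpa using bdd_summable hm hh (g := fun _ => 1) (R := 1) (by simp)
  have hge : -H ≤ ∑' x, h x * m x := by
    have : |∑' x, h x * m x| ≤ H := tsum_of_norm_bounded (f := fun x => h x * m x) hh.hasSum (fun x => by
      rw [Real.norm_eq_abs, abs_mul, abs_of_pos (hm.pos x)])
    exact neg_le_of_abs_le this
  rw [heq, hs.tsum_add (hasSum_ite_eq o _).summable, tsum_ite_eq, hTe]
  have : ((H + 1) / (h o * m o) + 1 - 1) * (h o * m o) = H + 1 := by
    rw [add_sub_cancel_right, div_mul_cancel₀ _ hom.ne']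
  rw [this]
  linarith

end KW

/-- for `c > 0`, the equation `Lu = h e^u - c` has a solution iff `h`
is positive somewhere. -/
theorem stmt7 {X : Type*} [Countable X] (b : X → X → ℝ) (m : X → ℝ)
    (hb : IsGraph b) (hconn : GraphConnected b) (hm : FinMeasure m)
    (hcc : CanCompact b m) (c : ℝ) (hc : 0 < c)
    (h : X → ℝ) (hh2 : MemL2 m h) (hne : h ≠ 0) :
    (∃ u : X → ℝ, IsLap b m u (fun x => h x * Real.exp (u x) - c)) ↔
      (∃ x, 0 < h x) := by
  have hh := KW.l2_l1 hm hh2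
  obtain ⟨o, _⟩ : ∃ o, h o ≠ 0 := Function.ne_iff.1 hne
  constructor
  · rintro ⟨u, _, hf, hu⟩
    by_contra hcon
    push Not at hcon
    have h1 := hu (fun _ => 1) (KW.const_dq hm 1)
    simp only [energyBil, sub_self, mul_zero, tsum_zero, mul_one] at h1
    have hs : Summable (fun x => (h x * Real.exp (u x) - c) * m x) := by
      simpa using KW.bdd_summable hm (KW.l2_l1 hm hf) (g := fun _ => 1) (R := 1) (by simp)
    have hneg : ∀ x, 0 < -((h x * Real.exp (u x) - c) * m x) := by
      intro x
      have h2 := mul_nonpos_of_nonpos_of_nonneg (hcon x) (Real.exp_pos (u x)).le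
      have h3 := mul_pos (show 0 < c - h x * Real.exp (u x) by linarith) (hm.pos x)
      linarith
    have := hs.neg.tsum_pos (fun x => (hneg x).le) o (hneg o)
    rw [tsum_neg] at this
    linarith
  · rintro ⟨x0, hx0⟩
    obtain ⟨u, hu, hA, hmin⟩ := KW.exists_min hb hconn hm hcc o hc hh
      (KW.exists_pos_expInt hb hm hh hx0)
    set M := ∑' x, m x with hM
    have hMpos : 0 < M := hm.summable.tsum_pos (fun x => (hm.pos x).le) o (hm.pos o)
    have hr : 0 < c * M / KW.expInt m h u := by positivity
    set s := Real.log (c * M / KW.expInt m h u) with hs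
    have hse : Real.exp s = c * M / KW.expInt m h u := Real.exp_log (by positivity)
    have hq := KW.shift_dq hm hu s
    obtain ⟨R, hR⟩ := hcc _ hq
    obtain ⟨R0, hR0⟩ := hcc _ hu
    refine ⟨fun x => u x + s, hq, ?_, fun v hv => ?_⟩
    · have h1 : MemL2 m (fun x => h x * Real.exp (u x + s)) := by
        refine Summable.of_nonneg_of_le (fun x => mul_nonneg (sq_nonneg _) (hm.pos x).le)
          (fun x => ?_) (hh2.mul_left (Real.exp R ^ 2))
        have h2 := KW.exp_bdd hR x
        have h3 : Real.exp (u x + s) ^ 2 ≤ Real.exp R ^ 2 := by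
          rw [← sq_abs (Real.exp (u x + s))]
          exact pow_le_pow_left₀ (abs_nonneg _) h2 2
        have h4 := mul_le_mul_of_nonneg_right h3 (mul_nonneg (sq_nonneg (h x)) (hm.pos x).le)
        nlinarith
      simpa [sub_eq_add_neg] using KW.l2_add hm h1 (KW.const_dq (b := b) hm (-c)).1
    · obtain ⟨S, hS⟩ := hcc v hv
      have he := KW.euler hb hm hcc hh hu hA hmin hv
      have hbil : energyBil b (fun x => u x + s) v = energyBil b u v := by
        simp [energyBil]
      have hs1 : Summable (fun x => h x * Real.exp (u x) * v x * m x) := by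
        have := KW.bdd_summable hm hh (g := fun x => Real.exp (u x) * v x)
          (R := Real.exp R0 * S) (fun x => by
            rw [abs_mul]
            exact mul_le_mul (KW.exp_bdd hR0 x) (hS x) (abs_nonneg _) (Real.exp_pos _).le)
        simpa [mul_assoc] using this
      have hs2 := (KW.sum_bdd hm hS).1
      have hsum : ∑' x, (h x * Real.exp (u x + s) - c) * v x * m x =
          Real.exp s * (∑' x, h x * Real.exp (u x) * v x * m x) - c * ∑' x, v x * m x := by
        rw [← tsum_mul_left, ← tsum_mul_left, ← (hs1.mul_left _).tsum_sub (hs2.mul_left c)]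
        refine tsum_congr (fun x => ?_)
        rw [Real.exp_add]; ring
      rw [hbil, hsum, hse]
      have : c * M * ((∑' x, h x * Real.exp (u x) * v x * m x) / KW.expInt m h u) =
        c * M / KW.expInt m h u * (∑' x, h x * Real.exp (u x) * v x * m x) := by ring
      rw [← this]
      linarith
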